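/- arXiv:math/0107085 — 2 statements merged into one kernel-verified Lean document; each statement's English description precedes it below -/
import Mathlib

section
/- Non-existence of C² Baumslag–Solitar actions: For integers n > m > 1, no subgroup of Diff²₊(I) is isomorphic to the Baumslag–Solitar group BS(m,n) = ⟨a, b | a bᵐ a⁻¹ = bⁿ⟩; equivalently, there is no injective group homomorphism from BS(m,n) into Diff²₊(I). If moreover m does not divide n, then likewise no subgroup of Diff²₊(S¹) is isomorphic to BS(m,n). -/
/-- The single defining relation of the Baumslag–Solitar group
`BS(m,n) = ⟨a, b | a bᵐ a⁻¹ = bⁿ⟩`, with `a = FreeGroup.of 0` and `b = FreeGroup.of 1`. -/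
abbrev BSRels (m n : ℕ) : Set (FreeGroup (Fin 2)) :=
  {FreeGroup.of 0 * FreeGroup.of 1 ^ m * (FreeGroup.of 0)⁻¹ * (FreeGroup.of 1 ^ n)⁻¹}

/-- A permutation of `ℝ` representing an orientation-preserving C² diffeomorphism of
`I = [0,1]`: it is the identity off `[0,1]`, is C² on `[0,1]`, and has positive
(one-sided, at the endpoints) derivative on `[0,1]`. -/
def IsDiffI (f : Equiv.Perm ℝ) : Prop :=
  (∀ x, x ∉ Set.Icc (0 : ℝ) 1 → f x = x) ∧
  ContDiffOn ℝ 2 f (Set.Icc 0 1) ∧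
  ∀ x ∈ Set.Icc (0 : ℝ) 1, 0 < derivWithin f (Set.Icc 0 1) x

/-- A permutation of `S¹ = ℝ/ℤ` representing an orientation-preserving C²
diffeomorphism of the circle: it is induced by a C² map `F : ℝ → ℝ` with everywhere
positive derivative satisfying `F (x+1) = F x + 1`. -/
def IsDiffCircle (f : Equiv.Perm (AddCircle (1 : ℝ))) : Prop :=
  ∃ F : ℝ → ℝ, ContDiff ℝ 2 F ∧ (∀ x, 0 < deriv F x) ∧
    (∀ x, F (x + 1) = F x + 1) ∧ ∀ x : ℝ, f ↑x = ↑(F x)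

/-!
Two facts collide. In a group of C² diffeomorphisms of an interval, `g ^ m = f ^ n` forces `f` and
`g` to commute: on a component of the complement of the fixed point set of `f`, the order dynamics
of `f` and the relation `f ^ n * g = g * f ^ n` produce a point at which `f * g` and `g * f` agree,
so the commutator of `f` and `g` has a fixed point; as it commutes with `f ^ n`, it is the identity
there by Kopell's lemma. But `f = b ^ r` and `g = a * b ^ r * a⁻¹` satisfy `g ^ m = f ^ n` in
`BS(m,n)` and, by Britton's lemma, do not commute when neither `m` nor `n` divides `r`.

For the interval take `r = 1`. For the circle take `r = |m - n|`: if `τ` is the translation number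
of a lift of `b`, then `a * b ^ m = b ^ n * a` makes `m * τ` and `n * τ` differ by an integer. Hence
`f` and `g` both have fixed points; sharing a power, they have a common one, and the circle can be
cut open there.
-/

open Set Filter Topology
open scoped NNReal

/-! ### Monotone maps and their iterates -/

section OrderTopology

variable {α : Type*} [LinearOrder α] [TopologicalSpace α] [OrderTopology α]

theorem forall_lt_or_forall_gt_of_isPreconnected {X : Type*} [TopologicalSpace X] {s : Set X}
    (hs : IsPreconnected s) {f g : X → α} (hf : ContinuousOn f s) (hg : ContinuousOn g s)
    (hne : ∀ x ∈ s, f x ≠ g x) : (∀ x ∈ s, f x < g x) ∨ ∀ x ∈ s, g x < f x := by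
  by_contra! ⟨⟨y, hy, hgf⟩, z, hz, hfg⟩
  obtain ⟨w, hw, heq⟩ := hs.intermediate_value₂ hz hy hf hg hfg hgf
  exact hne w hw heq

theorem exists_commute_apply_of_iterate {s : Set α} (hs : IsPreconnected s) {f g : α → α}
    (hf : Monotone f) (hfc : Continuous f) (hgc : Continuous g) (hfs : MapsTo f s s)
    {n : ℕ} (hn : 0 < n) {x : α} (hx : x ∈ s) (hfg : f^[n] (g x) = g (f^[n] x)) :
    ∃ y ∈ s, f (g y) = g (f y) := by
  by_contra! hne
  have horbit : ∀ k, f^[k] x ∈ s := fun k => hfs.iterate k hx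
  rcases forall_lt_or_forall_gt_of_isPreconnected hs (hfc.comp hgc).continuousOn
    (hgc.comp hfc).continuousOn hne with hlt | hgt
  · refine (hf.seq_pos_lt_seq_of_le_of_lt (x := fun k => f^[k] (g x)) (y := fun k => g (f^[k] x))
      hn le_rfl (fun k _ => ?_) fun k _ => ?_).ne hfg
    · rw [Function.iterate_succ_apply']
    · simpa only [Function.iterate_succ_apply', Function.comp_apply] using hlt _ (horbit k)
  · refine (hf.seq_pos_lt_seq_of_lt_of_le (x := fun k => g (f^[k] x)) (y := fun k => f^[k] (g x))
      hn le_rfl (fun k _ => ?_) fun k _ => ?_).ne' hfg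
    · simpa only [Function.iterate_succ_apply', Function.comp_apply] using hgt _ (horbit k)
    · rw [Function.iterate_succ_apply']

end OrderTopology

theorem pow_apply_eq_self_iff_of_monotone {α : Type*} [LinearOrder α] {f : Equiv.Perm α}
    (hf : Monotone f) {n : ℕ} (hn : n ≠ 0) {x : α} : (f ^ n) x = x ↔ f x = x := by
  rw [Equiv.Perm.coe_pow]
  simpa using Function.Commute.id_right.iterate_pos_eq_iff_map_eq (x := x) hf strictMono_id
    (Nat.pos_of_ne_zero hn)

theorem tendsto_iterate_atTop_of_forall_lt {α : Type*} [ConditionallyCompleteLinearOrder α]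
    [TopologicalSpace α] [OrderTopology α] {f : α → α} {p a : α} (hf : Monotone f)
    (hfc : Continuous f) (hp : f p = p) (hlt : ∀ x ∈ Ioc p a, f x < x) (hpa : p < a) :
    Tendsto (fun i => f^[i] a) atTop (𝓝 p) := by
  have hge : ∀ i, p ≤ f^[i] a := fun i => by
    simpa only [Function.iterate_fixed hp] using hf.iterate i hpa.le
  have hanti : Antitone fun i => f^[i] a :=
    hf.antitone_iterate_of_map_le (hlt a ⟨hpa, le_rfl⟩).le
  have hbdd : BddBelow (range fun i => f^[i] a) := ⟨p, forall_mem_range.2 hge⟩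
  have hlim := tendsto_atTop_ciInf hanti hbdd
  have hfix : f (⨅ i, f^[i] a) = ⨅ i, f^[i] a :=
    isFixedPt_of_tendsto_iterate hlim hfc.continuousAt
  have hinf : ⨅ i, f^[i] a = p := by
    refine ((le_ciInf hge).eq_or_lt).elim Eq.symm fun hpl => ?_
    exact absurd hfix (hlt _ ⟨hpl, ciInf_le hbdd 0⟩).ne
  rwa [hinf] at hlim

theorem exists_Ioo_fixedPoint_free {α : Type*} [ConditionallyCompleteLinearOrder α]
    [TopologicalSpace α] [OrderTopology α] {f : α → α} {u v x : α} (hf : Continuous f)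
    (hu : f u = u) (hv : f v = v) (hx : x ∈ Icc u v) (hfx : f x ≠ x) :
    ∃ p q, f p = p ∧ f q = q ∧ Icc p q ⊆ Icc u v ∧ x ∈ Ioo p q ∧ ∀ y ∈ Ioo p q, f y ≠ y := by
  have hclosed : IsClosed {y | f y = y} := isClosed_fixedPoints hf
  obtain ⟨p, ⟨⟨hup, hpx⟩, hp⟩, hmax⟩ :=
    (isCompact_Icc.inter_right hclosed).exists_isGreatest ⟨u, left_mem_Icc.2 hx.1, hu⟩
  obtain ⟨q, ⟨⟨hxq, hqv⟩, hq⟩, hmin⟩ :=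
    (isCompact_Icc.inter_right hclosed).exists_isLeast ⟨v, right_mem_Icc.2 hx.2, hv⟩
  have hpx' : p < x := hpx.lt_of_ne fun h => hfx (h ▸ hp)
  have hxq' : x < q := hxq.lt_of_ne' fun h => hfx (h ▸ hq)
  refine ⟨p, q, hp, hq, Icc_subset_Icc hup hqv, ⟨hpx', hxq'⟩, fun y hy hfy => ?_⟩
  rcases le_total y x with hyx | hxy
  · exact (hmax ⟨⟨hup.trans hy.1.le, hyx⟩, hfy⟩).not_gt hy.1
  · exact (hmin ⟨⟨hxy, hy.2.le.trans hqv⟩, hfy⟩).not_gt hy.2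

theorem eqOn_id_of_lipschitzOnWith_inv_pow {h : Equiv.Perm ℝ} (hh : Monotone h) {s : Set ℝ}
    (hs : Bornology.IsBounded s) (hmaps : MapsTo h s s) {K : ℝ≥0}
    (hK : ∀ i : ℕ, LipschitzOnWith K ⇑(h⁻¹ ^ i) s) : EqOn h id s := by
  intro x hx
  have horbit : ∀ i, h^[i] x ∈ s := fun i => hmaps.iterate i hx
  have hrange : range (fun i => h^[i] x) ⊆ s := range_subset_iff.2 horbit
  obtain ⟨l, hl⟩ : ∃ l, Tendsto (fun i => h^[i] x) atTop (𝓝 l) := by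
    rcases le_total x (h x) with hle | hle
    · exact ⟨_, tendsto_atTop_ciSup (hh.monotone_iterate_of_le_map hle) (hs.bddAbove.mono hrange)⟩
    · exact ⟨_, tendsto_atTop_ciInf (hh.antitone_iterate_of_map_le hle) (hs.bddBelow.mono hrange)⟩
  have hgap : Tendsto (fun i => K * dist (h^[i] (h x)) (h^[i] x)) atTop (𝓝 0) := by
    simpa using ((hl.comp (tendsto_add_atTop_nat 1)).dist hl).const_mul (K : ℝ)
  have hcancel : ∀ (i : ℕ) z, (h⁻¹ ^ i) (h^[i] z) = z := fun i z => by
    rw [← Equiv.Perm.coe_pow, inv_pow]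
    exact (h ^ i).symm_apply_apply z
  have hbound : ∀ i, dist (h x) x ≤ K * dist (h^[i] (h x)) (h^[i] x) := fun i => by
    have := (hK i).dist_le_mul _ (horbit (i + 1)) _ (horbit i)
    rwa [Function.iterate_succ_apply, hcancel, hcancel] at this
  exact dist_le_zero.1 (ge_of_tendsto' hgap hbound)

/-! ### Bounded distortion and Kopell's lemma -/

theorem slope_comp {k : Type*} [Field k] (f g : k → k) (x y : k) :
    slope (f ∘ g) x y = slope f (g x) (g y) * slope g x y := by
  simp only [slope_def_field, Function.comp_apply]
  rcases eq_or_ne (g y) (g x) with h | h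
  · simp [h]
  · rw [div_mul_div_cancel₀ (sub_ne_zero.2 h)]

theorem slope_mul_slope_of_commute {k : Type*} [Field k] {f g : k → k}
    (h : Function.Commute f g) (x y : k) :
    slope f (g x) (g y) * slope g x y = slope g (f x) (f y) * slope f x y := by
  rw [← slope_comp, ← slope_comp, h.comp_eq]

theorem lipschitzOnWith_of_slope_le {k : ℝ → ℝ} {s : Set ℝ} {K : ℝ≥0} (hk : MonotoneOn k s)
    (hle : ∀ x ∈ s, ∀ y ∈ s, x < y → slope k x y ≤ K) : LipschitzOnWith K k s := by
  have hlt : ∀ x ∈ s, ∀ y ∈ s, x < y → dist (k x) (k y) ≤ K * dist x y := fun x hx y hy hxy => by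
    rw [dist_comm (k x), dist_comm x, Real.dist_eq, Real.dist_eq, abs_of_pos (sub_pos.2 hxy),
      abs_of_nonneg (sub_nonneg.2 (hk hx hy hxy.le)), ← div_le_iff₀ (sub_pos.2 hxy),
      ← slope_def_field]
    exact hle x hx y hy hxy
  refine LipschitzOnWith.of_dist_le_mul fun x hx y hy => ?_
  rcases lt_trichotomy x y with hxy | rfl | hxy
  · exact hlt x hx y hy hxy
  · simp
  · rw [dist_comm (k x), dist_comm x]
    exact hlt y hy x hx hxy

/-- Bounded distortion with constant `C` on `s`: over every interval `[α, β] ⊆ s`, any two slopes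
of `f` differ by a factor of at most `exp (C * (β - α))`. For a differentiable `f` with positive
derivative this says that `log f'` is `C`-Lipschitz on the intervals contained in `s`; phrasing it
with slopes makes it meaningful for arbitrary functions. -/
def BoundedDistortionOnWith (C : ℝ≥0) (f : ℝ → ℝ) (s : Set ℝ) : Prop :=
  ∀ ⦃α β⦄, Icc α β ⊆ s → ∀ ⦃x⦄, x ∈ Icc α β → ∀ ⦃y⦄, y ∈ Icc α β → ∀ ⦃z⦄, z ∈ Icc α β →
    ∀ ⦃w⦄, w ∈ Icc α β → x < y → z < w → slope f x y ≤ Real.exp (C * (β - α)) * slope f z w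

namespace BoundedDistortionOnWith

variable {C : ℝ≥0} {f : ℝ → ℝ} {s t : Set ℝ} {p a x y z w : ℝ}

theorem mono (hf : BoundedDistortionOnWith C f t) (hst : s ⊆ t) : BoundedDistortionOnWith C f s :=
  fun _ _ hαβ => hf (hαβ.trans hst)

/-- The intervals `f^[j] '' [f a, a]`, `j < i`, do not overlap, so their lengths sum to
`a - f^[i] a` and the distortion constants of the `i` factors multiply up to a bounded one. -/
theorem slope_iterate_le (hd : BoundedDistortionOnWith C f (Icc p a)) (hf : StrictMono f)
    (hp : f p = p) (hpa : p ≤ a) (ha : f a ≤ a) (hx : x ∈ Icc (f a) a) (hy : y ∈ Icc (f a) a)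
    (hz : z ∈ Icc (f a) a) (hw : w ∈ Icc (f a) a) (hxy : x < y) (hzw : z < w) (i : ℕ) :
    slope f^[i] x y ≤ Real.exp (C * (a - f^[i] a)) * slope f^[i] z w := by
  have hge : ∀ i, p ≤ f^[i] a := fun i => by
    simpa only [Function.iterate_fixed hp] using hf.monotone.iterate i hpa
  have hle : ∀ i, f^[i] a ≤ a := fun i =>
    hf.monotone.antitone_iterate_of_map_le ha (Nat.zero_le i)
  have hmaps : ∀ i {t}, t ∈ Icc (f a) a → f^[i] t ∈ Icc (f^[i + 1] a) (f^[i] a) := fun i t ht => by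
    rw [Function.iterate_succ_apply]
    exact ⟨hf.monotone.iterate i ht.1, hf.monotone.iterate i ht.2⟩
  have hstep : ∀ i s t,
      slope f^[i + 1] s t = slope f (f^[i] s) (f^[i] t) * slope f^[i] s t := fun i s t => by
    rw [Function.iterate_succ', slope_comp]
  induction i with
  | zero => simp [slope_def_field, (sub_pos.2 hxy).ne', (sub_pos.2 hzw).ne']
  | succ i ih =>
    have hone := hd (Icc_subset_Icc (hge (i + 1)) (hle i)) (hmaps i hx) (hmaps i hy) (hmaps i hz)
      (hmaps i hw) (hf.iterate i hxy) (hf.iterate i hzw)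
    rw [hstep, hstep]
    calc slope f (f^[i] x) (f^[i] y) * slope f^[i] x y
        ≤ (Real.exp (C * (f^[i] a - f^[i + 1] a)) * slope f (f^[i] z) (f^[i] w)) *
            (Real.exp (C * (a - f^[i] a)) * slope f^[i] z w) :=
          mul_le_mul hone ih (slope_pos_iff_of_le hxy.le |>.2 (hf.iterate i hxy)).le
            ((slope_pos_iff_of_le (hf.iterate i hxy).le |>.2 (hf (hf.iterate i hxy))).le.trans hone)
      _ = Real.exp (C * (a - f^[i + 1] a)) *
            (slope f (f^[i] z) (f^[i] w) * slope f^[i] z w) := by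
          rw [show C * (a - f^[i + 1] a)
            = C * (f^[i] a - f^[i + 1] a) + C * (a - f^[i] a) by ring, Real.exp_add]
          ring

theorem slope_le_of_endpoints_fixed (hd : BoundedDistortionOnWith C f (Icc p a)) (hpa : p < a)
    (hp : f p = p) (ha : f a = a) (hx : x ∈ Icc p a) (hy : y ∈ Icc p a) (hxy : x < y) :
    slope f x y ≤ Real.exp (C * (a - p)) := by
  have hone : slope f p a = 1 := by rw [slope_def_field, hp, ha, div_self (sub_pos.2 hpa).ne']
  simpa only [hone, mul_one] using
    hd Subset.rfl hx hy (left_mem_Icc.2 hpa.le) (right_mem_Icc.2 hpa.le) hxy hpa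

/-- By the chain rule `k' = (k' ∘ f^[i]) * (f^[i])' / ((f^[i])' ∘ k)`. As `i → ∞` the first factor
tends to `1`, because `k` has fixed points `f^[i] a` accumulating at `p`, and the other two are
comparable by bounded distortion of `f^[i]`. -/
theorem slope_le_of_commute (hd : BoundedDistortionOnWith C f (Icc p a)) (hf : StrictMono f)
    (hfc : Continuous f) (hp : f p = p) (hlt : ∀ x ∈ Ioc p a, f x < x) (hpa : p < a)
    {k : ℝ → ℝ} {c : ℝ≥0} (hk : StrictMono k) (hkd : BoundedDistortionOnWith c k (Icc p a))
    (hfk : Function.Commute f k) (hkp : k p = p) (hka : k a = a)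
    (hx : x ∈ Icc (f a) a) (hy : y ∈ Icc (f a) a) (hxy : x < y) :
    slope k x y ≤ Real.exp (C * (a - p)) := by
  have hlim := tendsto_iterate_atTop_of_forall_lt hf.monotone hfc hp hlt hpa
  have hanti : Antitone fun i => f^[i] a :=
    hf.monotone.antitone_iterate_of_map_le (hlt a ⟨hpa, le_rfl⟩).le
  have hgt : ∀ i, p < f^[i] a := fun i => by
    simpa only [Function.iterate_fixed hp] using hf.iterate i hpa
  have hkmaps : ∀ {t}, t ∈ Icc (f a) a → k t ∈ Icc (f a) a := fun ht =>
    ⟨by simpa only [← hfk a, hka] using hk.monotone ht.1, hka ▸ hk.monotone ht.2⟩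
  have hfmaps : ∀ i {t}, t ∈ Icc (f a) a → f^[i] t ∈ Icc p (f^[i] a) := fun i t ht =>
    ⟨(hgt (i + 1)).le.trans (hf.monotone.iterate i ht.1), hf.monotone.iterate i ht.2⟩
  have hbound : ∀ i, slope k x y ≤
      Real.exp (c * (f^[i] a - p)) * Real.exp (C * (a - f^[i] a)) := fun i => by
    have hfix : k (f^[i] a) = f^[i] a := by rw [← hfk.iterate_left i a, hka]
    have hkslope : slope k (f^[i] x) (f^[i] y) ≤ Real.exp (c * (f^[i] a - p)) :=
      (hkd.mono (Icc_subset_Icc_right (hanti (Nat.zero_le i)))).slope_le_of_endpoints_fixed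
        (hgt i) hkp hfix (hfmaps i hx) (hfmaps i hy) (hf.iterate i hxy)
    have hpos : 0 < slope f^[i] (k x) (k y) :=
      (slope_pos_iff_of_le (hk hxy).le).2 (hf.iterate i (hk hxy))
    refine le_of_mul_le_mul_right ?_ hpos
    rw [mul_comm, slope_mul_slope_of_commute (hfk.iterate_left i), mul_assoc]
    exact mul_le_mul hkslope (hd.slope_iterate_le hf hp hpa.le (hlt a ⟨hpa, le_rfl⟩).le hx hy
      (hkmaps hx) (hkmaps hy) hxy (hk hxy) i)
      ((slope_pos_iff_of_le hxy.le).2 (hf.iterate i hxy)).le (Real.exp_pos _).le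
  have htendsto : Tendsto (fun i => Real.exp (c * (f^[i] a - p)) * Real.exp (C * (a - f^[i] a)))
      atTop (𝓝 (Real.exp (c * (p - p)) * Real.exp (C * (a - p)))) :=
    (((hlim.sub_const p).const_mul _).rexp).mul (((hlim.const_sub a).const_mul _).rexp)
  simpa using ge_of_tendsto' htendsto hbound

end BoundedDistortionOnWith

/-- The group `S` of homeomorphisms of the line supported in `(u, v)` consists of maps of bounded
distortion on `[u, v]`. This is all that the Denjoy–Kopell argument needs to know about a group of
C² diffeomorphisms of `[u, v]`. -/
structure ActsWithBoundedDistortion (S : Subgroup (Equiv.Perm ℝ)) (u v : ℝ) : Prop where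
  strictMono : ∀ f ∈ S, StrictMono f
  apply_eq_self : ∀ f ∈ S, ∀ x ∉ Ioo u v, f x = x
  exists_boundedDistortionOnWith : ∀ f ∈ S, ∃ C, BoundedDistortionOnWith C f (Icc u v)

namespace ActsWithBoundedDistortion

variable {S : Subgroup (Equiv.Perm ℝ)} {u v p q a x₀ : ℝ} {f g h : Equiv.Perm ℝ}

theorem continuous (hS : ActsWithBoundedDistortion S u v) (hf : f ∈ S) : Continuous f :=
  (hS.strictMono f hf).monotone.continuous_of_surjective f.surjective

theorem eqOn_id_fundamentalDomain (hS : ActsWithBoundedDistortion S u v) (hf : f ∈ S) (hh : h ∈ S)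
    (hfh : Commute f h) (hpa : p < a) (hsub : Icc p a ⊆ Icc u v) (hfp : f p = p)
    (hlt : ∀ x ∈ Ioc p a, f x < x) (hhp : h p = p) (hha : h a = a) :
    EqOn h id (Icc (f a) a) := by
  have hmono := hS.strictMono h hh
  have hmaps : MapsTo h (Icc (f a) a) (Icc (f a) a) := by
    have hhfa : h (f a) = f a := by
      rw [← Equiv.Perm.mul_apply, ← hfh.eq, Equiv.Perm.mul_apply, hha]
    simpa only [hhfa, hha] using hmono.monotone.mapsTo_Icc (a := f a) (b := a)
  obtain ⟨C, hC⟩ := hS.exists_boundedDistortionOnWith f hf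
  refine eqOn_id_of_lipschitzOnWith_inv_pow hmono.monotone (Metric.isBounded_Icc _ _) hmaps
    (K := (Real.exp (C * (a - p))).toNNReal) fun i => ?_
  have hi : h⁻¹ ^ i ∈ S := S.pow_mem (S.inv_mem hh) i
  obtain ⟨c, hc⟩ := hS.exists_boundedDistortionOnWith _ hi
  have hfi : Commute f (h⁻¹ ^ i) := hfh.inv_right.pow_right i
  have hfix : ∀ {t}, h t = t → (h⁻¹ ^ i) t = t := fun ht =>
    Equiv.Perm.pow_apply_eq_self_of_apply_eq_self (Equiv.Perm.inv_eq_iff_eq.2 ht.symm) i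
  refine lipschitzOnWith_of_slope_le ((hS.strictMono _ hi).monotone.monotoneOn _)
    fun x hx y hy hxy => ?_
  rw [Real.coe_toNNReal _ (Real.exp_pos _).le]
  exact (hC.mono hsub).slope_le_of_commute (hS.strictMono f hf) (hS.continuous hf) hfp hlt hpa
    (hS.strictMono _ hi) (hc.mono hsub) (fun t => DFunLike.congr_fun hfi.eq t) (hfix hhp)
    (hfix hha) hx hy hxy

theorem eqOn_id_of_forall_lt (hS : ActsWithBoundedDistortion S u v) (hf : f ∈ S) (hh : h ∈ S)
    (hfh : Commute f h) (hsub : Icc p q ⊆ Icc u v) (hfp : f p = p)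
    (hlt : ∀ x ∈ Ioo p q, f x < x) (hx₀ : x₀ ∈ Ioo p q) (hhx₀ : h x₀ = x₀) :
    EqOn h id (Ioo p q) := by
  have hmono := (hS.strictMono f hf).monotone
  have hltx : ∀ {x}, x ∈ Ioo p q → ∀ y ∈ Ioc p x, f y < y := fun hx y hy =>
    hlt y ⟨hy.1, hy.2.trans_lt hx.2⟩
  have hlim : ∀ {x}, x ∈ Ioo p q → Tendsto (fun i => f^[i] x) atTop (𝓝 p) := fun hx =>
    tendsto_iterate_atTop_of_forall_lt hmono (hS.continuous hf) hfp (hltx hx) hx.1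
  have hfh' : ∀ i, Function.Commute f^[i] h := fun i =>
    Function.Commute.iterate_left (fun t => DFunLike.congr_fun hfh.eq t) i
  have hhp : h p = p := (isClosed_fixedPoints (hS.continuous hh)).mem_of_tendsto (hlim hx₀) <|
    .of_forall fun i => (hfh' i x₀).symm.trans (congrArg f^[i] hhx₀)
  intro x hx
  obtain ⟨M, hM⟩ := ((hlim hx).eventually_lt_const hx₀.1).exists
  have hpM : p < f^[M] x := by
    simpa only [Function.iterate_fixed hfp] using (hS.strictMono f hf).iterate M hx.1
  obtain ⟨N, hN, hNpos⟩ :=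
    (((hlim hx₀).eventually_lt_const hpM).and (eventually_gt_atTop 0)).exists
  have hltN : ∀ y ∈ Ioc p x₀, (f ^ N) y < y := fun y hy => by
    have hy' := hltx hx₀ y hy
    rw [Equiv.Perm.coe_pow]
    exact (hmono.antitone_iterate_of_map_le hy'.le hNpos).trans_lt hy'
  have hfixed : h (f^[M] x) = f^[M] x :=
    hS.eqOn_id_fundamentalDomain (S.pow_mem hf N) hh (hfh.pow_left N) hx₀.1
      ((Icc_subset_Icc_right hx₀.2.le).trans hsub)
      (Equiv.Perm.pow_apply_eq_self_of_apply_eq_self hfp N) hltN hhp hhx₀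
      ⟨by rw [Equiv.Perm.coe_pow]; exact hN.le, hM.le⟩
  exact f.injective.iterate M ((hfh' M x).trans hfixed)

/-- **Kopell's lemma**. -/
theorem eqOn_id_of_commute (hS : ActsWithBoundedDistortion S u v) (hf : f ∈ S) (hh : h ∈ S)
    (hfh : Commute f h) (hsub : Icc p q ⊆ Icc u v) (hfp : f p = p) (hfq : f q = q)
    (hne : ∀ x ∈ Ioo p q, f x ≠ x) (hx₀ : x₀ ∈ Ioo p q) (hhx₀ : h x₀ = x₀) :
    EqOn h id (Ioo p q) := by
  rcases forall_lt_or_forall_gt_of_isPreconnected isPreconnected_Ioo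
    (hS.continuous hf).continuousOn continuousOn_id hne with hlt | hgt
  · exact hS.eqOn_id_of_forall_lt hf hh hfh hsub hfp hlt hx₀ hhx₀
  · have hmono := hS.strictMono _ (S.inv_mem hf)
    have hinv : ∀ {t}, f t = t → f⁻¹ t = t := fun ht => Equiv.Perm.inv_eq_iff_eq.2 ht.symm
    refine hS.eqOn_id_of_forall_lt (S.inv_mem hf) hh hfh.inv_left hsub (hinv hfp)
      (fun x hx => ?_) hx₀ hhx₀
    have hmem : f⁻¹ x ∈ Ioo p q := by
      simpa only [hinv hfp, hinv hfq] using hmono.mapsTo_Ioo hx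
    simpa using hgt _ hmem

/-- If `f` and `g` commute at some point, then `(f * g)⁻¹ * (g * f)` fixes it; this permutation
commutes with `f ^ n`, so Kopell's lemma applies. -/
theorem apply_apply_comm_of_commute_pow (hS : ActsWithBoundedDistortion S u v) (hf : f ∈ S)
    (hg : g ∈ S) {n : ℕ} (hn : n ≠ 0) (hfg : Commute (f ^ n) g) (hsub : Icc p q ⊆ Icc u v)
    (hfp : f p = p) (hfq : f q = q) (hne : ∀ x ∈ Ioo p q, f x ≠ x) {x : ℝ} (hx : x ∈ Ioo p q) :
    f (g x) = g (f x) := by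
  have hmono := hS.strictMono f hf
  have hpow : ∀ t, (f ^ n) t = t ↔ f t = t := fun _ =>
    pow_apply_eq_self_iff_of_monotone hmono.monotone hn
  obtain ⟨y, hy, hfgy⟩ := exists_commute_apply_of_iterate isPreconnected_Ioo hmono.monotone
    (hS.continuous hf) (hS.continuous hg)
    (by simpa only [hfp, hfq] using hmono.mapsTo_Ioo (a := p) (b := q)) (Nat.pos_of_ne_zero hn) hx
    (by rw [← Equiv.Perm.coe_pow]; exact DFunLike.congr_fun hfg.eq x)
  have hfix : ∀ t, ((f * g)⁻¹ * (g * f)) t = t ↔ f (g t) = g (f t) := fun t => by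
    rw [Equiv.Perm.mul_apply, Equiv.Perm.inv_eq_iff_eq, eq_comm, Equiv.Perm.mul_apply,
      Equiv.Perm.mul_apply]
  have hff : Commute (f ^ n) f := Commute.pow_self f n
  have hcomm : Commute (f ^ n) ((f * g)⁻¹ * (g * f)) :=
    (hff.mul_right hfg).inv_right.mul_right (hfg.mul_right hff)
  exact (hfix x).1 <| hS.eqOn_id_of_commute (S.pow_mem hf n)
    (S.mul_mem (S.inv_mem (S.mul_mem hf hg)) (S.mul_mem hg hf)) hcomm hsub ((hpow p).2 hfp)
    ((hpow q).2 hfq) (fun t ht => (hpow t).not.2 (hne t ht)) hy ((hfix y).2 hfgy) hx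

theorem commute_of_pow_eq_pow (hS : ActsWithBoundedDistortion S u v) (hf : f ∈ S) (hg : g ∈ S)
    {m n : ℕ} (hm : m ≠ 0) (hn : n ≠ 0) (hgf : g ^ m = f ^ n) : Commute f g := by
  have hfix : ∀ t, f t = t → g t = t := fun t ht => by
    rwa [← pow_apply_eq_self_iff_of_monotone (hS.strictMono g hg).monotone hm, hgf,
      pow_apply_eq_self_iff_of_monotone (hS.strictMono f hf).monotone hn]
  refine Equiv.ext fun x => ?_
  rw [Equiv.Perm.mul_apply, Equiv.Perm.mul_apply]
  by_cases hfx : f x = x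
  · rw [hfx, hfix x hfx, hfx]
  · have hx : x ∈ Ioo u v := by_contra fun hx => hfx (hS.apply_eq_self f hf x hx)
    obtain ⟨p, q, hfp, hfq, hsub, hxpq, hne⟩ := exists_Ioo_fixedPoint_free (hS.continuous hf)
      (hS.apply_eq_self f hf u left_notMem_Ioo) (hS.apply_eq_self f hf v right_notMem_Ioo)
      (Ioo_subset_Icc_self hx) hfx
    exact hS.apply_apply_comm_of_commute_pow hf hg hn (hgf ▸ Commute.pow_self g m) hsub hfp hfq
      hne hxpq

end ActsWithBoundedDistortion

/-! ### C² diffeomorphisms of an interval -/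

theorem strictMono_of_strictMonoOn_of_eqOn_compl {α : Type*} [LinearOrder α] {s : Set α}
    [s.OrdConnected] {f : Equiv.Perm α} (hf : StrictMonoOn f s) (hid : EqOn f id sᶜ) :
    StrictMono f := by
  have hmaps : ∀ {x}, x ∈ s → f x ∈ s := fun {x} hx => by
    by_contra hfx
    exact hfx ((f.injective (hid hfx)).symm ▸ hx)
  intro x y hxy
  by_cases hx : x ∈ s <;> by_cases hy : y ∈ s
  · exact hf hx hy hxy
  · rw [hid hy]
    exact lt_of_not_ge fun hle => hy (Set.Icc_subset s hx (hmaps hx) ⟨hxy.le, hle⟩)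
  · rw [hid hx]
    exact lt_of_not_ge fun hle => hx (Set.Icc_subset s (hmaps hy) hy ⟨hle, hxy.le⟩)
  · rwa [hid hx, hid hy]

theorem boundedDistortionOnWith_of_hasDerivAt_exp {f φ : ℝ → ℝ} {s : Set ℝ} {C : ℝ≥0}
    (hf : ContinuousOn f s) (hderiv : ∀ x ∈ interior s, HasDerivAt f (Real.exp (φ x)) x)
    (hφ : LipschitzOnWith C φ (interior s)) : BoundedDistortionOnWith C f s := by
  intro α β hsub x hx y hy z hz w hw hxy hzw
  have hint : Ioo α β ⊆ interior s :=
    interior_maximal (Ioo_subset_Icc_self.trans hsub) isOpen_Ioo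
  have hmvt : ∀ {a b}, a ∈ Icc α β → b ∈ Icc α β → a < b →
      ∃ c ∈ Ioo α β, Real.exp (φ c) = slope f a b := fun {a b} ha hb hab => by
    have hIoo : Ioo a b ⊆ Ioo α β := Ioo_subset_Ioo ha.1 hb.2
    obtain ⟨c, hc, hslope⟩ := exists_hasDerivAt_eq_slope f (fun t => Real.exp (φ t)) hab
      (hf.mono ((Icc_subset_Icc ha.1 hb.2).trans hsub)) fun t ht => hderiv t (hint (hIoo ht))
    exact ⟨c, hIoo hc, by rw [hslope, slope_def_field]⟩
  obtain ⟨c, hc, hcslope⟩ := hmvt hx hy hxy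
  obtain ⟨d, hd, hdslope⟩ := hmvt hz hw hzw
  rw [← hcslope, ← hdslope, ← Real.exp_add, Real.exp_le_exp]
  calc φ c ≤ φ d + C * dist c d := hφ.le_add_mul (hint hc) (hint hd)
    _ ≤ C * (β - α) + φ d := by
      have hdist := Real.dist_le_of_mem_Icc (Ioo_subset_Icc_self hc) (Ioo_subset_Icc_self hd)
      rw [add_comm]
      gcongr

/-- `f` restricts to an orientation-preserving C² diffeomorphism of `[u, v]` and is the identity
elsewhere; `IsDiffI` is the case `u = 0`, `v = 1`. -/
def IsDiffIcc (u v : ℝ) (f : Equiv.Perm ℝ) : Prop :=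
  (∀ x, x ∉ Icc u v → f x = x) ∧
  ContDiffOn ℝ 2 f (Icc u v) ∧
  ∀ x ∈ Icc u v, 0 < derivWithin f (Icc u v) x

namespace IsDiffIcc

variable {u v : ℝ} {f : Equiv.Perm ℝ}

theorem strictMono (hf : IsDiffIcc u v f) : StrictMono f := by
  obtain ⟨hid, hC2, hpos⟩ := hf
  refine strictMono_of_strictMonoOn_of_eqOn_compl (s := Icc u v)
    (strictMonoOn_of_deriv_pos (convex_Icc u v) hC2.continuousOn fun x hx => ?_) hid
  rw [← derivWithin_of_mem_nhds (mem_interior_iff_mem_nhds.1 hx)]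
  exact hpos x (interior_subset hx)

theorem apply_eq_self (hf : IsDiffIcc u v f) {x : ℝ} (hx : x ∉ Ioo u v) : f x = x := by
  have hclosed : IsClosed {y | f y = y} :=
    isClosed_fixedPoints (hf.strictMono.monotone.continuous_of_surjective f.surjective)
  have hclosure : x ∈ closure (Icc u v)ᶜ := by rwa [closure_compl, interior_Icc]
  exact closure_minimal hf.1 hclosed hclosure

theorem exists_boundedDistortionOnWith (huv : u < v) (hf : IsDiffIcc u v f) :
    ∃ C, BoundedDistortionOnWith C f (Icc u v) := by
  obtain ⟨-, hC2, hpos⟩ := hf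
  have hlog : ContDiffOn ℝ 1 (fun x => Real.log (derivWithin f (Icc u v) x)) (Icc u v) :=
    (hC2.derivWithin (uniqueDiffOn_Icc huv) (by norm_num)).log fun x hx => (hpos x hx).ne'
  obtain ⟨C, hC⟩ := (hlog.locallyLipschitzOn (convex_Icc u v)).exists_lipschitzOnWith_of_compact
    isCompact_Icc
  refine ⟨C, boundedDistortionOnWith_of_hasDerivAt_exp hC2.continuousOn (fun x hx => ?_)
    (hC.mono interior_subset)⟩
  rw [Real.exp_log (hpos x (interior_subset hx))]
  exact (hC2.differentiableOn two_ne_zero x (interior_subset hx)).hasDerivWithinAt.hasDerivAt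
    (mem_interior_iff_mem_nhds.1 hx)

end IsDiffIcc

theorem actsWithBoundedDistortion_of_isDiffIcc {S : Subgroup (Equiv.Perm ℝ)} {u v : ℝ}
    (huv : u < v) (hS : ∀ f ∈ S, IsDiffIcc u v f) : ActsWithBoundedDistortion S u v where
  strictMono f hf := (hS f hf).strictMono
  apply_eq_self f hf _ := (hS f hf).apply_eq_self
  exists_boundedDistortionOnWith f hf := (hS f hf).exists_boundedDistortionOnWith huv

/-! ### Baumslag–Solitar groups -/

section BaumslagSolitar

/-- Special case of Britton's lemma: the commutator of `t x t⁻¹` and `y` is a reduced word. -/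
theorem not_commute_t_mul_of_mul_t_inv {G : Type*} [Group G] {A B : Subgroup G} (φ : A ≃* B)
    {x y : G} (hx : x ∉ A) (hy : y ∉ B) :
    ¬ Commute (HNNExtension.t * HNNExtension.of x * HNNExtension.t⁻¹ : HNNExtension G A B φ)
      (HNNExtension.of y) := by
  intro hcomm
  let w : HNNExtension.NormalWord.ReducedWord G A B :=
    { head := 1
      toList := [(1, x), (-1, y), (1, x⁻¹), (-1, y⁻¹)]
      chain := by simp [hx, hy] }
  have hw : w.prod φ = 1 := by
    have := mul_inv_eq_one.2 hcomm.eq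
    simpa [w, HNNExtension.NormalWord.ReducedWord.prod, mul_assoc] using this
  have hnil := HNNExtension.ReducedWord.toList_eq_nil_of_mem_of_range φ w (hw ▸ one_mem _)
  simp [w] at hnil

/-- The isomorphism `g ^ m ↦ g ^ n` between the subgroups of `m`-th and of `n`-th powers. -/
noncomputable def powRangeEquiv (G : Type*) [CommGroup G] [IsMulTorsionFree G] {m n : ℕ}
    (hm : m ≠ 0) (hn : n ≠ 0) :
    (powMonoidHom m : G →* G).range ≃* (powMonoidHom n : G →* G).range :=
  (MonoidHom.ofInjective (f := (powMonoidHom m : G →* G)) (pow_left_injective hm)).symm.trans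
    (MonoidHom.ofInjective (f := (powMonoidHom n : G →* G)) (pow_left_injective hn))

theorem powRangeEquiv_pow {G : Type*} [CommGroup G] [IsMulTorsionFree G] {m n : ℕ} (hm : m ≠ 0)
    (hn : n ≠ 0) (g : G) : (powRangeEquiv G hm hn ⟨g ^ m, g, rfl⟩ : G) = g ^ n := by
  have hg : (⟨g ^ m, g, rfl⟩ : (powMonoidHom m : G →* G).range) =
      MonoidHom.ofInjective (f := (powMonoidHom m : G →* G)) (pow_left_injective hm) g := rfl
  rw [hg, powRangeEquiv, MulEquiv.trans_apply, MulEquiv.symm_apply_apply]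
  rfl

theorem ofAdd_one_pow_mem_range_powMonoidHom {k r : ℕ} :
    (Multiplicative.ofAdd (1 : ℤ)) ^ r ∈
      (powMonoidHom k : Multiplicative ℤ →* Multiplicative ℤ).range ↔ k ∣ r := by
  rw [← Int.natCast_dvd_natCast]
  constructor
  · rintro ⟨x, hx⟩
    exact ⟨x.toAdd, by simpa using (congrArg Multiplicative.toAdd hx).symm⟩
  · rintro ⟨c, hc⟩
    exact ⟨Multiplicative.ofAdd c, by
      rw [powMonoidHom_apply, ← ofAdd_nsmul, ← ofAdd_nsmul]; simp [hc]⟩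

variable {m n : ℕ}

theorem conj_pow_of_BSRels :
    (PresentedGroup.of 0 : PresentedGroup (BSRels m n)) * PresentedGroup.of 1 ^ m *
      (PresentedGroup.of 0)⁻¹ = PresentedGroup.of 1 ^ n := by
  have h := PresentedGroup.one_of_mem (rels := BSRels m n) (mem_singleton _)
  simp only [map_mul, map_inv, map_pow] at h
  exact mul_inv_eq_one.1 h

theorem exists_hom_of_conj_pow {H : Type*} [Group H] {t b : H} (h : t * b ^ m * t⁻¹ = b ^ n) :
    ∃ φ : PresentedGroup (BSRels m n) →* H,
      φ (PresentedGroup.of 0) = t ∧ φ (PresentedGroup.of 1) = b := by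
  have hrel : ∀ w ∈ BSRels m n, FreeGroup.lift ![t, b] w = 1 := by
    rintro w rfl
    simp [h]
  exact ⟨PresentedGroup.toGroup hrel, PresentedGroup.toGroup.of hrel,
    PresentedGroup.toGroup.of hrel⟩

theorem not_commute_conj_pow {r : ℕ} (hm : m ≠ 0) (hn : n ≠ 0) (hmr : ¬ m ∣ r) (hnr : ¬ n ∣ r) :
    ¬ Commute
      ((PresentedGroup.of 0 : PresentedGroup (BSRels m n)) * PresentedGroup.of 1 ^ r *
        (PresentedGroup.of 0)⁻¹)
      (PresentedGroup.of 1 ^ r) := by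
  let e := powRangeEquiv (Multiplicative ℤ) hm hn
  let g : Multiplicative ℤ := Multiplicative.ofAdd 1
  have hconj : (HNNExtension.t * HNNExtension.of g ^ m * HNNExtension.t⁻¹ : HNNExtension _ _ _ e) =
      HNNExtension.of g ^ n := by
    simpa only [e, powRangeEquiv_pow, map_pow] using
      (HNNExtension.equiv_eq_conj (φ := e) ⟨g ^ m, g, rfl⟩).symm
  obtain ⟨Φ, hΦt, hΦb⟩ := exists_hom_of_conj_pow hconj
  intro hcomm
  refine not_commute_t_mul_of_mul_t_inv e (ofAdd_one_pow_mem_range_powMonoidHom.not.2 hmr)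
    (ofAdd_one_pow_mem_range_powMonoidHom.not.2 hnr) ?_
  simpa only [map_mul, map_inv, map_pow, hΦt, hΦb] using hcomm.map Φ

end BaumslagSolitar

/-! ### C² diffeomorphisms of the circle -/

theorem addCircle_coe_eq_coe_iff {x y : ℝ} :
    (x : AddCircle (1 : ℝ)) = y ↔ ∃ k : ℤ, x = y + k := by
  rw [← sub_eq_zero, ← AddCircle.coe_sub, AddCircle.coe_eq_zero_iff]
  simp only [zsmul_eq_mul, mul_one, eq_comm (b := x - y), sub_eq_iff_eq_add']

theorem exists_forall_eq_add_int_of_coe_eq {X : Type*} [TopologicalSpace X] [ConnectedSpace X]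
    {F G : X → ℝ} (hF : Continuous F) (hG : Continuous G)
    (h : ∀ x, (F x : AddCircle (1 : ℝ)) = G x) : ∃ k : ℤ, ∀ x, F x = G x + k := by
  obtain ⟨x₀⟩ := (inferInstance : Nonempty X)
  obtain ⟨k, hk⟩ := addCircle_coe_eq_coe_iff.1 (h x₀)
  have hcoe : ((↑) : ℝ → AddCircle (1 : ℝ)) ∘ F = (↑) ∘ fun x => G x + k := funext fun x =>
    (h x).trans (addCircle_coe_eq_coe_iff.2 ⟨k, rfl⟩).symm
  exact ⟨k, congrFun ((AddCircle.isCoveringMap_coe 1).eq_of_comp_eq hF (hG.add_const _) hcoe x₀ hk)⟩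

theorem translationNumber_eq_add_int_of_semiconj {A F G : CircleDeg1Lift} {k : ℤ}
    (h : ∀ x, A (F x) = G (A x) + k) :
    F.translationNumber = G.translationNumber + k := by
  let T : CircleDeg1Lift := (CircleDeg1Lift.translate (Multiplicative.ofAdd (k : ℝ)) : _ˣ)
  have hsemi : SemiconjBy A F (T * G) := by
    ext x
    simp [T, h, add_comm]
  have hcomm : Commute T G := by
    ext x
    simp [T]
  rw [CircleDeg1Lift.translationNumber_eq_of_semiconjBy hsemi,
    CircleDeg1Lift.translationNumber_mul_of_commute hcomm,
    CircleDeg1Lift.translationNumber_translate, add_comm]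

theorem exists_pow_dist_apply_eq_self {a b : Equiv.Perm (AddCircle (1 : ℝ))}
    {A B : CircleDeg1Lift} (hAc : Continuous A) (hBc : Continuous B)
    (hA : Function.Semiconj (↑) A a) (hB : Function.Semiconj (↑) B b) {m n : ℕ}
    (hab : a * b ^ m = b ^ n * a) : ∃ x, (b ^ Nat.dist m n) x = x := by
  have hpow : ∀ i, Function.Semiconj (↑) ⇑(B ^ i) ⇑(b ^ i) := fun i => by
    rw [CircleDeg1Lift.coe_pow, Equiv.Perm.coe_pow]
    exact hB.iterate_right i
  obtain ⟨k, hk⟩ := exists_forall_eq_add_int_of_coe_eq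
    (hAc.comp (B.continuous_pow hBc m)) ((B.continuous_pow hBc n).comp hAc) fun x => by
      rw [Function.comp_apply, Function.comp_apply, hA, hpow, hpow, hA]
      exact DFunLike.congr_fun hab (x : AddCircle (1 : ℝ))
  have hτ := translationNumber_eq_add_int_of_semiconj hk
  rw [CircleDeg1Lift.translationNumber_pow, CircleDeg1Lift.translationNumber_pow] at hτ
  obtain ⟨l, hl⟩ : ∃ l : ℤ, (B ^ Nat.dist m n).translationNumber = l := by
    rw [CircleDeg1Lift.translationNumber_pow]
    rcases le_total m n with hle | hle
    · refine ⟨-k, ?_⟩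
      rw [Nat.dist_eq_sub_of_le hle, Nat.cast_sub hle]
      push_cast
      linarith
    · refine ⟨k, ?_⟩
      rw [Nat.dist_eq_sub_of_le_right hle, Nat.cast_sub hle]
      linarith
  obtain ⟨x, hx⟩ := (CircleDeg1Lift.translationNumber_eq_int_iff _
    (B.continuous_pow hBc _)).1 hl
  exact ⟨x, by rw [← hpow, addCircle_coe_eq_coe_iff]; exact ⟨l, hx⟩⟩

/-- Cuts the circle open at `u`: a permutation of `ℝ/ℤ` acts on the fundamental domain `[u, u + 1)`,
extended by the identity to `ℝ`. -/
noncomputable def cutHom (u : ℝ) : Equiv.Perm (AddCircle (1 : ℝ)) →* Equiv.Perm ℝ :=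
  (Equiv.Perm.ofSubtype (p := (· ∈ Ico u (u + 1)))).comp
    (Equiv.permCongrHom (AddCircle.equivIco (1 : ℝ) u)).toMonoidHom

theorem cutHom_injective (u : ℝ) : Function.Injective (cutHom u) :=
  Equiv.Perm.ofSubtype_injective.comp
    (Equiv.permCongrHom (AddCircle.equivIco (1 : ℝ) u)).injective

section Cut

variable {u : ℝ} {g : Equiv.Perm (AddCircle (1 : ℝ))} {x : ℝ}

theorem cutHom_apply_of_mem (hx : x ∈ Ico u (u + 1)) :
    cutHom u g x = AddCircle.equivIco (1 : ℝ) u (g x) :=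
  Equiv.Perm.ofSubtype_apply_of_mem _ hx

theorem cutHom_apply_of_notMem (hx : x ∉ Ico u (u + 1)) : cutHom u g x = x :=
  Equiv.Perm.ofSubtype_apply_of_not_mem _ hx

theorem cutHom_apply_eq_self_iff (hx : x ∈ Ico u (u + 1)) : cutHom u g x = x ↔ g x = x := by
  rw [cutHom_apply_of_mem hx]
  constructor
  · intro h
    exact AddCircle.coe_equivIco.symm.trans (congrArg _ h)
  · intro h
    rw [h, AddCircle.equivIco_coe_of_mem hx]

end Cut

namespace IsDiffCircle

variable {f g : Equiv.Perm (AddCircle (1 : ℝ))}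

theorem exists_lift (hf : IsDiffCircle f) : ∃ F : CircleDeg1Lift,
    ContDiff ℝ 2 F ∧ (∀ x, 0 < deriv F x) ∧ Function.Semiconj (↑) F f := by
  obtain ⟨F, hC2, hpos, hdeg, hlift⟩ := hf
  exact ⟨⟨⟨F, (strictMono_of_deriv_pos hpos).monotone⟩, hdeg⟩, hC2, hpos, fun x => (hlift x).symm⟩

theorem exists_lift_of_apply_eq_self (hf : IsDiffCircle f) {u : ℝ} (hu : f u = u) :
    ∃ F : CircleDeg1Lift,
      ContDiff ℝ 2 F ∧ (∀ x, 0 < deriv F x) ∧ Function.Semiconj (↑) F f ∧ F u = u := by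
  obtain ⟨F, hC2, hpos, hlift⟩ := hf.exists_lift
  obtain ⟨k, hk⟩ := addCircle_coe_eq_coe_iff.1 ((hlift u).trans hu)
  let T : CircleDeg1Lift := (CircleDeg1Lift.translate (Multiplicative.ofAdd (-k : ℝ)) : _ˣ)
  have hTF : ⇑(T * F) = fun x => -k + F x := funext fun x => by simp [T]
  refine ⟨T * F, ?_, fun x => ?_, fun x => ?_, ?_⟩
  · exact hTF ▸ contDiff_const.add hC2
  · rw [hTF, deriv_const_add]
    exact hpos x
  · rw [← hlift x, addCircle_coe_eq_coe_iff, hTF]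
    exact ⟨-k, by push_cast; ring⟩
  · rw [hTF]
    linarith

theorem isDiffIcc_cutHom (hf : IsDiffCircle f) {u : ℝ} (hu : f u = u) :
    IsDiffIcc u (u + 1) (cutHom u f) := by
  obtain ⟨F, hC2, hpos, hlift, hFu⟩ := hf.exists_lift_of_apply_eq_self hu
  have hmono : StrictMono F := strictMono_of_deriv_pos hpos
  have hFu' : F (u + 1) = u + 1 := by rw [F.map_add_one, hFu]
  have heq : EqOn (cutHom u f) F (Icc u (u + 1)) := fun x hx => by
    rcases hx.2.eq_or_lt with rfl | hlt
    · rw [cutHom_apply_of_notMem right_notMem_Ico, hFu']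
    · rw [cutHom_apply_of_mem ⟨hx.1, hlt⟩, ← hlift x]
      refine AddCircle.equivIco_coe_of_mem ?_
      simpa only [hFu, hFu'] using hmono.mapsTo_Ico ⟨hx.1, hlt⟩
  refine ⟨fun x hx => cutHom_apply_of_notMem fun h => hx (Ico_subset_Icc_self h),
    hC2.contDiffOn.congr heq, fun x hx => ?_⟩
  rw [derivWithin_congr heq (heq hx), (hC2.differentiable two_ne_zero x).derivWithin
    (uniqueDiffOn_Icc (lt_add_one u) x hx)]
  exact hpos x

theorem apply_eq_self_of_pow (hf : IsDiffCircle f) {x y : AddCircle (1 : ℝ)} (hy : f y = y)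
    {n : ℕ} (hn : n ≠ 0) (hx : (f ^ n) x = x) : f x = x := by
  obtain ⟨u, rfl⟩ := QuotientAddGroup.mk_surjective y
  obtain ⟨z, hz, rfl⟩ : ∃ z ∈ Ico u (u + 1), (z : AddCircle (1 : ℝ)) = x :=
    ⟨_, (AddCircle.equivIco 1 u x).2, AddCircle.coe_equivIco⟩
  rw [← cutHom_apply_eq_self_iff hz, map_pow] at hx
  rwa [← cutHom_apply_eq_self_iff hz, ← pow_apply_eq_self_iff_of_monotone
    (hf.isDiffIcc_cutHom hy).strictMono.monotone hn]

end IsDiffCircle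

theorem commute_of_isDiffCircle {S : Subgroup (Equiv.Perm (AddCircle (1 : ℝ)))}
    (hS : ∀ f ∈ S, IsDiffCircle f) {f g : Equiv.Perm (AddCircle (1 : ℝ))} (hf : f ∈ S) (hg : g ∈ S)
    {x y : AddCircle (1 : ℝ)} (hfx : f x = x) (hgy : g y = y) {m n : ℕ} (hm : m ≠ 0) (hn : n ≠ 0)
    (hgf : g ^ m = f ^ n) : Commute f g := by
  have hgx : g x = x := (hS g hg).apply_eq_self_of_pow hgy hm <| by
    rw [hgf]
    exact Equiv.Perm.pow_apply_eq_self_of_apply_eq_self hfx n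
  obtain ⟨u, rfl⟩ := QuotientAddGroup.mk_surjective x
  let S' := (S ⊓ MulAction.stabilizer _ (u : AddCircle (1 : ℝ))).map (cutHom u)
  have hS' : ActsWithBoundedDistortion S' u (u + 1) := by
    refine actsWithBoundedDistortion_of_isDiffIcc (lt_add_one u) ?_
    rintro _ ⟨h, ⟨hh, hhu⟩, rfl⟩
    exact (hS h hh).isDiffIcc_cutHom hhu
  exact (hS'.commute_of_pow_eq_pow ⟨f, ⟨hf, hfx⟩, rfl⟩ ⟨g, ⟨hg, hgx⟩, rfl⟩ hm hn
    (by rw [← map_pow, ← map_pow, hgf])).of_map (cutHom_injective u)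

/-! ### Actions of Baumslag–Solitar groups -/

theorem conj_pow_pow_eq_pow_pow {G : Type*} [Group G] {a b : G} {m n : ℕ}
    (h : a * b ^ m * a⁻¹ = b ^ n) (r : ℕ) : (a * b ^ r * a⁻¹) ^ m = (b ^ r) ^ n := by
  rw [conj_pow, pow_right_comm, ← conj_pow, h, pow_right_comm]

theorem not_exists_injective_isDiffIcc {m n : ℕ} (hm : 1 < m) (hn : 1 < n) {u v : ℝ} (huv : u < v) :
    ¬ ∃ φ : PresentedGroup (BSRels m n) →* Equiv.Perm ℝ,
      Function.Injective φ ∧ ∀ w, IsDiffIcc u v (φ w) := by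
  rintro ⟨φ, hinj, hφ⟩
  have hS : ActsWithBoundedDistortion φ.range u v :=
    actsWithBoundedDistortion_of_isDiffIcc huv (by rintro _ ⟨w, rfl⟩; exact hφ w)
  have hm₀ : m ≠ 0 := Nat.ne_zero_of_lt hm
  have hn₀ : n ≠ 0 := Nat.ne_zero_of_lt hn
  refine not_commute_conj_pow (r := 1) hm₀ hn₀ (Nat.dvd_one.not.2 hm.ne') (Nat.dvd_one.not.2 hn.ne')
    (Commute.symm ((hS.commute_of_pow_eq_pow ⟨_, rfl⟩ ⟨_, rfl⟩ hm₀ hn₀ ?_).of_map hinj))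
  rw [← map_pow, ← map_pow, conj_pow_pow_eq_pow_pow conj_pow_of_BSRels]

theorem dvd_dist_left_iff {m n : ℕ} : m ∣ Nat.dist m n ↔ m ∣ n := by
  rcases le_total m n with h | h
  · rw [Nat.dist_eq_sub_of_le h, Nat.dvd_sub_iff_left h dvd_rfl]
  · rw [Nat.dist_eq_sub_of_le_right h, Nat.dvd_sub_iff_right h dvd_rfl]

theorem dvd_dist_right_iff {m n : ℕ} : n ∣ Nat.dist m n ↔ n ∣ m := by
  rw [Nat.dist_comm, dvd_dist_left_iff]

theorem not_exists_injective_isDiffCircle {m n : ℕ} (hmn : ¬ m ∣ n) (hnm : ¬ n ∣ m) :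
    ¬ ∃ φ : PresentedGroup (BSRels m n) →* Equiv.Perm (AddCircle (1 : ℝ)),
      Function.Injective φ ∧ ∀ w, IsDiffCircle (φ w) := by
  rintro ⟨φ, hinj, hφ⟩
  have hm₀ : m ≠ 0 := fun h => hnm (h ▸ dvd_zero n)
  have hn₀ : n ≠ 0 := fun h => hmn (h ▸ dvd_zero m)
  let a : PresentedGroup (BSRels m n) := PresentedGroup.of 0
  let b : PresentedGroup (BSRels m n) := PresentedGroup.of 1
  have hrel : a * b ^ m * a⁻¹ = b ^ n := conj_pow_of_BSRels
  let r := Nat.dist m n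
  obtain ⟨A, hA, -, hAlift⟩ := (hφ a).exists_lift
  obtain ⟨B, hB, -, hBlift⟩ := (hφ b).exists_lift
  obtain ⟨x, hx⟩ : ∃ x, φ (b ^ r) x = x := by
    rw [map_pow]
    refine exists_pow_dist_apply_eq_self hA.continuous hB.continuous hAlift hBlift ?_
    rw [← map_pow, ← map_pow, ← map_mul, ← map_mul, ← hrel, inv_mul_cancel_right]
  have hfix : φ (a * b ^ r * a⁻¹) (φ a x) = φ a x := by
    rw [← Equiv.Perm.mul_apply, ← map_mul, inv_mul_cancel_right, map_mul, Equiv.Perm.mul_apply, hx]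
  refine not_commute_conj_pow hm₀ hn₀ (dvd_dist_left_iff.not.2 hmn)
    (dvd_dist_right_iff.not.2 hnm) ?_
  refine Commute.symm ((commute_of_isDiffCircle (S := φ.range) ?_ ⟨_, rfl⟩ ⟨_, rfl⟩
    hx hfix hm₀ hn₀ ?_).of_map hinj)
  · rintro _ ⟨w, rfl⟩
    exact hφ w
  · rw [← map_pow, ← map_pow, conj_pow_pow_eq_pow_pow hrel]

theorem bs_no_C2_action_general (m n : ℕ) (hm : 1 < m) (hn : 1 < n) :
    (¬ ∃ φ : PresentedGroup (BSRels m n) →* Equiv.Perm ℝ,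
        Function.Injective φ ∧ ∀ w, IsDiffI (φ w)) ∧
    (¬ m ∣ n → ¬ n ∣ m →
      ¬ ∃ φ : PresentedGroup (BSRels m n) →* Equiv.Perm (AddCircle (1 : ℝ)),
        Function.Injective φ ∧ ∀ w, IsDiffCircle (φ w)) :=
  ⟨not_exists_injective_isDiffIcc hm hn one_pos, not_exists_injective_isDiffCircle⟩

/-- **Non-existence of C² Baumslag–Solitar actions.** For integers `n > m > 1`, there
is no injective group homomorphism from `BS(m,n) = ⟨a, b | a bᵐ a⁻¹ = bⁿ⟩` into
`Diff²₊(I)`; if moreover `m` does not divide `n`, there is also no injective group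
homomorphism from `BS(m,n)` into `Diff²₊(S¹)`. -/
theorem bs_no_C2_action (m n : ℕ) (hm : 1 < m) (hmn : m < n) :
    (¬ ∃ φ : PresentedGroup (BSRels m n) →* Equiv.Perm ℝ,
        Function.Injective φ ∧ ∀ w, IsDiffI (φ w)) ∧
    (¬ (m ∣ n) → ¬ ∃ φ : PresentedGroup (BSRels m n) →* Equiv.Perm (AddCircle (1 : ℝ)),
        Function.Injective φ ∧ ∀ w, IsDiffCircle (φ w)) := by
  have h := bs_no_C2_action_general m n hm (hm.trans hmn)
  exact ⟨h.1, fun hdvd => h.2 hdvd (Nat.not_dvd_of_pos_of_lt (by positivity) hmn)⟩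
end

section
/- Local rigidity of the standard BS(1,n) action: Let n ≥ 2 be an integer, g₀(x) = nx and h₀(x) = x + 1. There exists ε > 0 such that: whenever g and h are C¹ diffeomorphisms of ℝ (continuously differentiable bijections with positive derivative) satisfying sup_{x∈ℝ} |g(x) − g₀(x)| < ε, sup_{x∈ℝ} |g'(x) − n| < ε, sup_{x∈ℝ} |h(x) − h₀(x)| < ε, sup_{x∈ℝ} |h'(x) − 1| < ε, and the relation g ∘ h ∘ g⁻¹ = hⁿ, there exists a homeomorphism φ of ℝ with φ ∘ g = g₀ ∘ φ and φ ∘ h = h₀ ∘ φ; that is, the action of BS(1,n) generated by g and h is topologically conjugate to the standard affine action generated by g₀ and h₀. -/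
/-!
Since `h` moves every point to the right, counting fundamental domains `[hᵐ x₀, hᵐ⁺¹ x₀)` gives an
integer-valued monotone `τ` with `τ ∘ h = τ + 1`, and the relation `g h = hⁿ g` makes `τ ∘ g - n τ`
bounded. Hence `φ = lim τ ∘ gᵏ / nᵏ` exists and semiconjugates `(g, h)` to `(n ·, · + 1)`. It is
injective because `g` is expanding: the images under `gᵏ` of distinct points eventually lie a whole
fundamental domain apart. It is continuous because points in a common fundamental domain have
`φ`-values at distance at most `1`, so points whose `gᵏ`-images are in a common fundamental domain
have `φ`-values at distance at most `n⁻ᵏ`.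
-/

open Filter Topology Function

section TateLimit

variable {X 𝕜 : Type*} [NormedField 𝕜]

/-- Tate's limit `lim τ (fᵏ x) / aᵏ`: the canonical correction of a function `τ` with `τ ∘ f - a τ`
bounded to one with `τ ∘ f = a τ`, as for canonical heights. -/
noncomputable def tateLimit (a : 𝕜) (f : X → X) (τ : X → 𝕜) (x : X) : 𝕜 :=
  limUnder atTop fun k : ℕ => τ (f^[k] x) / a ^ k

variable {a : 𝕜} {f : X → X} {τ : X → 𝕜} {C : ℝ}

theorem dist_iterate_div_pow_succ_le (ha : a ≠ 0) (hτ : ∀ x, ‖τ (f x) - a * τ x‖ ≤ C)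
    (x : X) (k : ℕ) :
    dist (τ (f^[k] x) / a ^ k) (τ (f^[k + 1] x) / a ^ (k + 1)) ≤ C / ‖a‖ * ‖a‖⁻¹ ^ k := by
  have key : τ (f^[k] x) / a ^ k - τ (f^[k + 1] x) / a ^ (k + 1) =
      -(τ (f (f^[k] x)) - a * τ (f^[k] x)) / a ^ (k + 1) := by
    rw [iterate_succ_apply']
    field_simp
    ring
  rw [dist_eq_norm, key, norm_div, norm_neg, norm_pow]
  calc ‖τ (f (f^[k] x)) - a * τ (f^[k] x)‖ / ‖a‖ ^ (k + 1) ≤ C / ‖a‖ ^ (k + 1) := by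
        gcongr
        exact hτ _
    _ = C / ‖a‖ * ‖a‖⁻¹ ^ k := by
        rw [pow_succ', inv_pow, div_mul_eq_div_div, div_eq_mul_inv _ (‖a‖ ^ k)]

theorem tendsto_tateLimit [CompleteSpace 𝕜] (ha : 1 < ‖a‖)
    (hτ : ∀ x, ‖τ (f x) - a * τ x‖ ≤ C) (x : X) :
    Tendsto (fun k : ℕ => τ (f^[k] x) / a ^ k) atTop (𝓝 (tateLimit a f τ x)) :=
  (cauchySeq_of_le_geometric _ _ (inv_lt_one_of_one_lt₀ ha) <|
    dist_iterate_div_pow_succ_le (norm_pos_iff.1 (one_pos.trans ha)) hτ x).tendsto_limUnder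

theorem semiconj_tateLimit [CompleteSpace 𝕜] (ha : 1 < ‖a‖)
    (hτ : ∀ x, ‖τ (f x) - a * τ x‖ ≤ C) : Semiconj (tateLimit a f τ) f (a * ·) := by
  intro x
  have ha₀ : a ≠ 0 := norm_pos_iff.1 (one_pos.trans ha)
  have shifted := ((tendsto_add_atTop_iff_nat 1).2 (tendsto_tateLimit ha hτ x)).const_mul a
  refine tendsto_nhds_unique (tendsto_tateLimit ha hτ (f x)) (shifted.congr fun k => ?_)
  rw [iterate_succ_apply, pow_succ]
  field_simp

theorem monotone_tateLimit [Preorder X] {a : ℝ} {τ : X → ℝ} (ha : 1 < a)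
    (hτ : ∀ x, ‖τ (f x) - a * τ x‖ ≤ C) (hf : Monotone f) (τ_mono : Monotone τ) :
    Monotone (tateLimit a f τ) := by
  intro x y hxy
  have ha' : 1 < ‖a‖ := ha.trans_le (le_abs_self a)
  refine le_of_tendsto_of_tendsto' (tendsto_tateLimit ha' hτ x) (tendsto_tateLimit ha' hτ y)
    fun k => ?_
  gcongr
  exact τ_mono (hf.iterate k hxy)

end TateLimit

theorem orderIso_coe_pow {X : Type*} [LE X] (e : X ≃o X) (k : ℕ) : ⇑(e ^ k) = e^[k] :=
  hom_coe_pow (fun e : X ≃o X => ⇑e) rfl (fun _ _ => rfl) e k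

theorem semiconjBy_pow_left_of_pow {G : Type*} [Monoid G] {g h : G} {n : ℕ}
    (hgh : SemiconjBy g h (h ^ n)) (k : ℕ) : SemiconjBy (g ^ k) h (h ^ n ^ k) := by
  induction k with
  | zero => simp
  | succ k ih => simpa only [pow_succ', pow_mul] using (hgh.pow_right (n ^ k)).mul_left ih

theorem strictMono_zpow_apply {X : Type*} [Preorder X] {h : X ≃o X} (hh : ∀ x, x < h x) (x : X) :
    StrictMono fun m : ℤ => (h ^ m) x :=
  strictMono_int_of_lt_succ fun m => by
    simpa only [add_comm m, zpow_one_add, RelIso.mul_apply] using hh ((h ^ m) x)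

section OrbitFloor

variable {X : Type*} [ConditionallyCompleteLinearOrder X] {h : X ≃o X}

theorem exists_lt_zpow_apply (hh : ∀ x, x < h x) (x y : X) : ∃ m : ℤ, y < (h ^ m) x := by
  by_contra! hy
  have bdd : BddAbove (Set.range fun m : ℤ => (h ^ m) x) := ⟨y, Set.forall_mem_range.2 hy⟩
  obtain ⟨m, hm⟩ := exists_lt_of_lt_ciSup (h.symm_apply_lt.2 (hh (⨆ m : ℤ, (h ^ m) x)))
  refine (h.symm_apply_lt.1 hm).not_ge ?_
  simpa only [zpow_one_add, RelIso.mul_apply] using le_ciSup bdd (1 + m)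

theorem exists_zpow_apply_lt (hh : ∀ x, x < h x) (x y : X) : ∃ m : ℤ, (h ^ m) x < y := by
  obtain ⟨m, hm⟩ := exists_lt_zpow_apply hh y x
  exact ⟨-m, by rw [zpow_neg]; exact (h ^ m).symm_apply_lt.2 hm⟩

/-- The index of the fundamental domain `[hᵐ x₀, hᵐ⁺¹ x₀)` of `h` that contains `x`. For
`h = (· + 1)` on `ℝ` and `x₀ = 0` this is `⌊x⌋`. -/
noncomputable def orbitFloor (h : X ≃o X) (x₀ x : X) : ℤ :=
  sSup {m : ℤ | (h ^ m) x₀ ≤ x}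

theorem gc_orbitFloor (hh : ∀ x, x < h x) (x₀ : X) :
    GaloisConnection (fun m : ℤ => (h ^ m) x₀) (orbitFloor h x₀) := by
  intro m x
  have mono := strictMono_zpow_apply hh x₀
  have nonempty : {m : ℤ | (h ^ m) x₀ ≤ x}.Nonempty :=
    (exists_zpow_apply_lt hh x₀ x).imp fun _ => le_of_lt
  have bdd : BddAbove {m : ℤ | (h ^ m) x₀ ≤ x} := by
    obtain ⟨N, hN⟩ := exists_lt_zpow_apply hh x₀ x
    exact ⟨N, fun k hk => (mono.lt_iff_lt.1 (hk.trans_lt hN)).le⟩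
  exact ⟨fun hm => le_csSup bdd hm,
    fun hm => (mono.monotone hm).trans (Int.csSup_mem nonempty bdd)⟩

theorem orbitFloor_zpow_apply (hh : ∀ x, x < h x) (x₀ x : X) (m : ℤ) :
    orbitFloor h x₀ ((h ^ m) x) = orbitFloor h x₀ x + m := by
  refine eq_of_forall_le_iff fun j => ?_
  simp only [← sub_le_iff_le_add, ← gc_orbitFloor hh _ _ _, sub_eq_neg_add, zpow_add, zpow_neg]
  exact (h ^ m).symm_apply_le.symm

theorem abs_orbitFloor_map_sub_mul_le {g : X ≃o X} {n : ℕ} (hh : ∀ x, x < h x)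
    (hgh : SemiconjBy g h (h ^ n)) (x₀ x : X) :
    |orbitFloor h x₀ (g x) - n * orbitFloor h x₀ x| ≤ |orbitFloor h x₀ (g x₀)| + n := by
  have gc := gc_orbitFloor hh x₀
  have map_orbit (m : ℤ) :
      orbitFloor h x₀ (g ((h ^ m) x₀)) = orbitFloor h x₀ (g x₀) + n * m := by
    have comm : g ((h ^ m) x₀) = (h ^ (n * m : ℤ)) (g x₀) := by
      rw [zpow_mul, zpow_natCast]
      exact DFunLike.congr_fun (hgh.zpow_right m) x₀
    rw [comm, orbitFloor_zpow_apply hh]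
  set m := orbitFloor h x₀ x
  have lower := gc.monotone_u (g.monotone (gc.l_u_le x))
  have upper := gc.monotone_u (g.monotone (gc.lt_iff_lt.2 (lt_add_one m)).le)
  rw [map_orbit] at lower upper
  have := neg_abs_le (orbitFloor h x₀ (g x₀))
  have := le_abs_self (orbitFloor h x₀ (g x₀))
  exact abs_le.2 ⟨by linarith, by linarith⟩

theorem exists_monotone_semiconj [Nonempty X] {g : X ≃o X} {n : ℕ} (hn : 2 ≤ n)
    (hh : ∀ x, x < h x) (hgh : SemiconjBy g h (h ^ n)) :
    ∃ φ : X → ℝ, Monotone φ ∧ Semiconj φ g (n * ·) ∧ Semiconj φ h (· + 1) := by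
  obtain ⟨x₀⟩ := ‹Nonempty X›
  set τ : X → ℝ := fun x => orbitFloor h x₀ x
  have τ_mono : Monotone τ := Int.cast_mono.comp (gc_orbitFloor hh x₀).monotone_u
  have hτ (x : X) : ‖τ (g x) - n * τ x‖ ≤ |(orbitFloor h x₀ (g x₀) : ℝ)| + n := by
    change |(orbitFloor h x₀ (g x) : ℝ) - n * orbitFloor h x₀ x| ≤ _
    exact_mod_cast abs_orbitFloor_map_sub_mul_le hh hgh x₀ x
  have hn' : (1 : ℝ) < n := by exact_mod_cast hn
  have hn_norm : 1 < ‖(n : ℝ)‖ := hn'.trans_le (le_abs_self _)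
  refine ⟨tateLimit n g τ, monotone_tateLimit hn' hτ g.monotone τ_mono,
    semiconj_tateLimit hn_norm hτ, fun x => ?_⟩
  refine tendsto_nhds_unique (tendsto_tateLimit hn_norm hτ (h x))
    (((tendsto_tateLimit hn_norm hτ x).add_const 1).congr fun k => ?_)
  have τ_iterate : τ (g^[k] (h x)) = τ (g^[k] x) + n ^ k := by
    have comm : g^[k] (h x) = (h ^ ((n ^ k : ℕ) : ℤ)) (g^[k] x) := by
      rw [zpow_natCast, ← orderIso_coe_pow]
      exact DFunLike.congr_fun (semiconjBy_pow_left_of_pow hgh k) x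
    simp only [τ, comm, orbitFloor_zpow_apply hh]
    push_cast
    rfl
  rw [τ_iterate]
  field_simp

end OrbitFloor

section AffineSemiconj

variable {X : Type*} {φ : X → ℝ} {g h : X → X} {a : ℝ}

theorem map_iterate_of_semiconj_mul_left (hφg : Semiconj φ g (a * ·)) (k : ℕ) (x : X) :
    φ (g^[k] x) = a ^ k * φ x := by
  rw [hφg.iterate_right k x, mul_left_iterate_apply]

theorem strictMono_of_semiconj [Preorder X] (ha : 0 < a) (hφ : Monotone φ)
    (hφg : Semiconj φ g (a * ·)) (hφh : Semiconj φ h (· + 1))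
    (hg : ∀ x y, x < y → ∃ k : ℕ, h (g^[k] x) ≤ g^[k] y) : StrictMono φ := by
  intro x y hxy
  obtain ⟨k, hk⟩ := hg x y hxy
  refine lt_of_mul_lt_mul_left ?_ (pow_pos ha k).le
  calc a ^ k * φ x < a ^ k * φ x + 1 := lt_add_one _
    _ = φ (h (g^[k] x)) := by rw [hφh.eq, map_iterate_of_semiconj_mul_left hφg]
    _ ≤ φ (g^[k] y) := hφ hk
    _ = a ^ k * φ y := map_iterate_of_semiconj_mul_left hφg k y

theorem continuous_of_semiconj [LinearOrder X] [TopologicalSpace X] [OrderClosedTopology X]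
    (ha : 1 < a) (hφ : Monotone φ) (hg : Continuous g) (h_surj : Surjective h)
    (hh : ∀ x, x < h x) (hφg : Semiconj φ g (a * ·)) (hφh : Semiconj φ h (· + 1)) :
    Continuous φ := by
  have near (u : X) : ∀ᶠ v in 𝓝 u, |φ v - φ u| ≤ 1 := by
    obtain ⟨w, rfl⟩ := h_surj u
    filter_upwards [Ioo_mem_nhds (hh w) (hh (h w))] with v hv
    have lower := hφ hv.1.le
    have upper := hφ hv.2.le
    simp only [hφh.eq] at upper ⊢
    exact abs_le.2 ⟨by linarith, by linarith⟩
  refine continuous_iff_continuousAt.2 fun x => Metric.continuousAt_iff'.2 fun δ hδ => ?_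
  obtain ⟨k, hk⟩ := pow_unbounded_of_one_lt (1 / δ) ha
  have hak : 0 < a ^ k := pow_pos (one_pos.trans ha) k
  filter_upwards [(hg.iterate k).continuousAt.eventually (near (g^[k] x))] with y hy
  refine lt_of_mul_lt_mul_left ?_ hak.le
  calc a ^ k * dist (φ y) (φ x) = |φ (g^[k] y) - φ (g^[k] x)| := by
        rw [map_iterate_of_semiconj_mul_left hφg, map_iterate_of_semiconj_mul_left hφg, ← mul_sub,
          abs_mul, abs_of_pos hak, Real.dist_eq]
    _ ≤ 1 := hy
    _ < a ^ k * δ := (div_lt_iff₀ hδ).1 hk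

theorem surjective_of_semiconj_add_one [TopologicalSpace X] [PreconnectedSpace X] [Nonempty X]
    (φ_cont : Continuous φ) (h_surj : Surjective h) (hφh : Semiconj φ h (· + 1)) :
    Surjective φ := by
  intro z
  obtain ⟨x⟩ := ‹Nonempty X›
  have φ_iterate (k : ℕ) (y : X) : φ (h^[k] y) = φ y + k := by
    rw [hφh.iterate_right k y, add_right_iterate_apply, nsmul_one]
  obtain ⟨k, hk⟩ := exists_nat_ge |z - φ x|
  obtain ⟨hk₁, hk₂⟩ := abs_le.1 hk
  obtain ⟨w, rfl⟩ := h_surj.iterate k x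
  have hw := φ_iterate k w
  have hx := φ_iterate k (h^[k] w)
  exact mem_range_of_exists_le_of_exists_ge φ_cont ⟨w, by linarith⟩
    ⟨h^[k] (h^[k] w), by linarith⟩

end AffineSemiconj

theorem bs_one_n_local_rigidity_general {X : Type*} [ConditionallyCompleteLinearOrder X]
    [DenselyOrdered X] [Nonempty X] {n : ℕ} (hn : 2 ≤ n) {g h : X ≃o X} (hh : ∀ x, x < h x)
    (hgh : SemiconjBy g h (h ^ n)) (hg : ∀ x y, x < y → ∃ k : ℕ, h (g^[k] x) ≤ g^[k] y) :
    ∃ φ : X ≃o ℝ, Semiconj φ g (n * ·) ∧ Semiconj φ h (· + 1) := by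
  let _ : TopologicalSpace X := Preorder.topology X
  have : OrderTopology X := ⟨rfl⟩
  obtain ⟨φ, φ_mono, φ_g, φ_h⟩ := exists_monotone_semiconj hn hh hgh
  have hn' : (1 : ℝ) < n := by exact_mod_cast hn
  have φ_strictMono := strictMono_of_semiconj (one_pos.trans hn') φ_mono φ_g φ_h hg
  have φ_cont := continuous_of_semiconj hn' φ_mono g.continuous h.surjective hh φ_g φ_h
  have φ_surj := surjective_of_semiconj_add_one φ_cont h.surjective φ_h
  exact ⟨φ_strictMono.orderIsoOfSurjective φ φ_surj, φ_g, φ_h⟩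

theorem pow_mul_sub_le_iterate_sub_of_le_deriv {f : ℝ → ℝ} {c : ℝ} (hc : 0 ≤ c)
    (hf : Differentiable ℝ f) (hf' : ∀ z, c ≤ deriv f z) {x y : ℝ} (hxy : x ≤ y) (k : ℕ) :
    c ^ k * (y - x) ≤ f^[k] y - f^[k] x := by
  induction k with
  | zero => simp
  | succ k ih =>
    have hk : f^[k] x ≤ f^[k] y :=
      sub_nonneg.1 ((mul_nonneg (pow_nonneg hc k) (sub_nonneg.2 hxy)).trans ih)
    rw [iterate_succ_apply', iterate_succ_apply']
    calc c ^ (k + 1) * (y - x) = c * (c ^ k * (y - x)) := by ring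
      _ ≤ c * (f^[k] y - f^[k] x) := by gcongr
      _ ≤ f (f^[k] y) - f (f^[k] x) := mul_sub_le_image_sub_of_le_deriv hf hf' hk

theorem exists_iterate_add_le_of_le_deriv {f : ℝ → ℝ} {c : ℝ} (hc : 1 < c)
    (hf : Differentiable ℝ f) (hf' : ∀ z, c ≤ deriv f z) (M : ℝ) {x y : ℝ} (hxy : x < y) :
    ∃ k : ℕ, f^[k] x + M ≤ f^[k] y := by
  obtain ⟨k, hk⟩ := pow_unbounded_of_one_lt (M / (y - x)) hc
  rw [div_lt_iff₀ (sub_pos.2 hxy)] at hk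
  have := pow_mul_sub_le_iterate_sub_of_le_deriv (by linarith) hf hf' hxy.le k
  exact ⟨k, by linarith⟩

/-- **Local rigidity of the standard `BS(1,n)` action on `ℝ`.** Let `n ≥ 2`,
`g₀ x = n x` and `h₀ x = x + 1`.  There is an `ε > 0` such that whenever `g` and `h`
are C¹ diffeomorphisms of `ℝ` (continuously differentiable bijections with positive
derivative) which are uniformly `ε`-C¹-close to `g₀` and `h₀` respectively and satisfy
the relation `g ∘ h ∘ g⁻¹ = hⁿ` (equivalently `g ∘ h = hⁿ ∘ g`), there is a
homeomorphism `φ` of `ℝ` conjugating the pair `(g, h)` to `(g₀, h₀)`: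
`φ ∘ g = g₀ ∘ φ` and `φ ∘ h = h₀ ∘ φ`. -/
theorem bs_one_n_local_rigidity (n : ℕ) (hn : 2 ≤ n) :
    ∃ ε > (0 : ℝ), ∀ g h : ℝ → ℝ,
      Function.Bijective g → ContDiff ℝ 1 g → (∀ x, 0 < deriv g x) →
      Function.Bijective h → ContDiff ℝ 1 h → (∀ x, 0 < deriv h x) →
      (∀ x : ℝ, |g x - n * x| < ε) → (∀ x : ℝ, |deriv g x - n| < ε) →
      (∀ x : ℝ, |h x - (x + 1)| < ε) → (∀ x : ℝ, |deriv h x - 1| < ε) →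
      (∀ x : ℝ, g (h x) = h^[n] (g x)) →
      ∃ φ : ℝ ≃ₜ ℝ, (∀ x : ℝ, φ (g x) = n * φ x) ∧ (∀ x : ℝ, φ (h x) = φ x + 1) := by
  refine ⟨1 / 2, by norm_num, fun g h g_bij g_C1 g_pos h_bij _ h_pos _ g_deriv h_near _ hgh => ?_⟩
  let G : ℝ ≃o ℝ := (strictMono_of_deriv_pos g_pos).orderIsoOfSurjective g g_bij.surjective
  let H : ℝ ≃o ℝ := (strictMono_of_deriv_pos h_pos).orderIsoOfSurjective h h_bij.surjective
  have relation : SemiconjBy G H (H ^ n) := RelIso.ext fun x =>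
    (hgh x).trans (congrFun (orderIso_coe_pow H n) (g x)).symm
  have H_gt (x : ℝ) : x < H x := by linarith [(abs_lt.1 (h_near x)).1, show H x = h x from rfl]
  have H_le (x : ℝ) : H x ≤ x + 3 / 2 := by
    linarith [(abs_lt.1 (h_near x)).2, show H x = h x from rfl]
  have hn' : (2 : ℝ) ≤ n := by exact_mod_cast hn
  have g_expands (z : ℝ) : 3 / 2 ≤ deriv g z := by linarith [(abs_lt.1 (g_deriv z)).1]
  have separate (x y : ℝ) (hxy : x < y) : ∃ k : ℕ, H (G^[k] x) ≤ G^[k] y :=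
    (exists_iterate_add_le_of_le_deriv (by norm_num) (g_C1.differentiable one_ne_zero) g_expands
      (3 / 2) hxy).imp fun k hk => (H_le _).trans hk
  obtain ⟨φ, φ_g, φ_h⟩ := bs_one_n_local_rigidity_general hn H_gt relation separate
  exact ⟨φ.toHomeomorph, φ_g, φ_h⟩
end
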